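/- arXiv:1211.1174 — 5 statements merged into one kernel-verified Lean document; each statement's English description precedes it below -/
import Mathlib

section
/- The map ν ↦ c_{ν,1} = Γ((ν+1)/2) / ((πν)^{1/2} Γ(ν/2)) is strictly monotonically increasing on (0, ∞). -/
open Real Set

/-!
For `0 < s < 1`, log-convexity of `Γ` squeezes `Γ(x + s) / (x ^ s Γ(x))` to the limit `1` as
`x → ∞` (Wendel). By the functional equation, the increment of its logarithm over a unit step is
`log (x + s) - (1 - s) log x - s log (x + 1)`, a Jensen gap of `log` which strictly decreases in
`x`. Hence, for `x < y`, the difference of the values at `y + n` and `x + n` strictly decreases in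
`n`; as it tends to `0`, it is positive at `n = 0`. Up to a constant factor, `c_{ν,k}` is Wendel's
ratio at `x = ν / 2` with `s = k / 2`.
-/

open Filter Topology

theorem strictMonoOn_of_strictAntiOn_fwdDiff {M G : Type*}
    [AddCommGroup M] [LinearOrder M] [IsOrderedAddMonoid M] [Archimedean M]
    [AddCommGroup G] [PartialOrder G] [IsOrderedAddMonoid G]
    [TopologicalSpace G] [ContinuousSub G] [OrderClosedTopology G]
    {f : M → G} {s : Set M} {h : M} {l : G} (hs : IsUpperSet s) (hh : 0 < h)
    (hanti : StrictAntiOn (fwdDiff h f) s) (hlim : Tendsto f atTop (𝓝 l)) :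
    StrictMonoOn f s := by
  intro x hx y hy hxy
  have mem_shift {z : M} (hz : z ∈ s) (n : ℕ) : z + n • h ∈ s :=
    hs (le_add_of_nonneg_right (nsmul_nonneg hh.le n)) hz
  have tendsto_shift (z : M) : Tendsto (fun n : ℕ => f (z + n • h)) atTop (𝓝 l) :=
    hlim.comp (tendsto_atTop_add_const_left _ z (tendsto_id.atTop_nsmul_const hh))
  let d : ℕ → G := fun n => f (y + n • h) - f (x + n • h)
  have d_strictAnti : StrictAnti d := by
    refine strictAnti_nat_of_succ_lt fun n => ?_
    have step := hanti (mem_shift hx n) (mem_shift hy n) (add_lt_add_left hxy (n • h))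
    simp only [fwdDiff, add_assoc, ← succ_nsmul, sub_lt_sub_iff] at step
    rwa [sub_lt_sub_iff, add_comm (f (y + n • h))]
  have d_tendsto : Tendsto d atTop (𝓝 0) := by
    simpa only [sub_self] using (tendsto_shift y).sub (tendsto_shift x)
  have d_zero_pos : 0 < d 0 :=
    (d_strictAnti.antitone.le_of_tendsto d_tendsto 1).trans_lt (d_strictAnti zero_lt_one)
  simpa only [d, zero_nsmul, add_zero, sub_pos] using d_zero_pos

theorem log_Gamma_add_one {x : ℝ} (hx : 0 < x) : log (Gamma (x + 1)) = log (Gamma x) + log x := by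
  rw [Gamma_add_one hx.ne', log_mul hx.ne' (Gamma_pos_of_pos hx).ne', add_comm]

/-- The logarithm of Wendel's ratio `Γ(x + s) / (x ^ s Γ(x))`, written out as a sum of logarithms;
it has this meaning when `x` and `x + s` are positive. -/
noncomputable def logWendelRatio (s x : ℝ) : ℝ :=
  log (Gamma (x + s)) - log (Gamma x) - s * log x

section Limit

variable {s x : ℝ}

theorem logWendelRatio_nonpos (hs : s ∈ Icc 0 1) (hx : 0 < x) : logWendelRatio s x ≤ 0 := by
  have hconv := convexOn_log_Gamma.2 (mem_Ioi.2 hx) (mem_Ioi.2 (by linarith : 0 < x + 1))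
    (sub_nonneg.2 hs.2) hs.1 (sub_add_cancel 1 s)
  simp only [smul_eq_mul, Function.comp_apply, log_Gamma_add_one hx] at hconv
  rw [show (1 - s) * x + s * (x + 1) = x + s by ring] at hconv
  rw [logWendelRatio]
  linarith

theorem logWendelRatio_add_logWendelRatio_one_sub (hx : 0 < x) :
    logWendelRatio s x + logWendelRatio (1 - s) (x + s) = (1 - s) * (log x - log (x + s)) := by
  simp only [logWendelRatio, add_assoc, add_sub_cancel, log_Gamma_add_one hx]
  ring

theorem tendsto_logWendelRatio_atTop (hs : s ∈ Icc 0 1) :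
    Tendsto (logWendelRatio s) atTop (𝓝 0) := by
  have lower_tendsto : Tendsto (fun x => (1 - s) * (log x - log (x + s))) atTop (𝓝 0) := by
    simpa using (tendsto_log_comp_add_sub_log s).neg.const_mul (1 - s)
  refine tendsto_of_tendsto_of_tendsto_of_le_of_le' lower_tendsto tendsto_const_nhds ?_ ?_
  · filter_upwards [eventually_gt_atTop 0] with x hx
    rw [← logWendelRatio_add_logWendelRatio_one_sub hx]
    exact add_le_of_nonpos_right <| logWendelRatio_nonpos
      ⟨sub_nonneg.2 hs.2, sub_le_self 1 hs.1⟩ (add_pos_of_pos_of_nonneg hx hs.1)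
  · filter_upwards [eventually_gt_atTop 0] with x hx using logWendelRatio_nonpos hs hx

end Limit

section Monotonicity

variable {s : ℝ}

theorem fwdDiff_logWendelRatio {x : ℝ} (hx : 0 < x) (hxs : 0 < x + s) :
    fwdDiff 1 (logWendelRatio s) x = log (x + s) - (1 - s) * log x - s * log (x + 1) := by
  simp only [fwdDiff, logWendelRatio, add_right_comm x 1 s, log_Gamma_add_one hx,
    log_Gamma_add_one hxs]
  ring

theorem strictAntiOn_log_jensen_gap (hs : s ∈ Ioo 0 1) :
    StrictAntiOn (fun x => log (x + s) - (1 - s) * log x - s * log (x + 1)) (Ioi 0) := by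
  have gap_hasDerivAt {x : ℝ} (hx : 0 < x) :
      HasDerivAt (fun x => log (x + s) - (1 - s) * log x - s * log (x + 1))
        (-(s * (1 - s)) / (x * (x + 1) * (x + s))) x := by
    have hxs : x + s ≠ 0 := (add_pos hx hs.1).ne'
    have hx1 : x + 1 ≠ 0 := (add_pos hx one_pos).ne'
    have gap_deriv := ((((hasDerivAt_id' x).add_const s).log hxs).sub
      ((hasDerivAt_log hx.ne').const_mul (1 - s))).sub
      ((((hasDerivAt_id' x).add_const 1).log hx1).const_mul s)
    refine gap_deriv.congr_deriv ?_
    field_simp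
    ring
  refine strictAntiOn_of_hasDerivWithinAt_neg (convex_Ioi 0)
    (fun x hx => (gap_hasDerivAt hx).continuousAt.continuousWithinAt)
    (fun x hx => (gap_hasDerivAt (interior_subset hx)).hasDerivWithinAt) fun x hx => ?_
  have hx : 0 < x := interior_subset hx
  have hs0 : 0 < s := hs.1
  have hs1 : 0 < 1 - s := sub_pos.2 hs.2
  exact div_neg_of_neg_of_pos (neg_neg_of_pos (by positivity)) (by positivity)

theorem strictMonoOn_logWendelRatio (hs : s ∈ Ioo 0 1) :
    StrictMonoOn (logWendelRatio s) (Ioi 0) :=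
  strictMonoOn_of_strictAntiOn_fwdDiff (isUpperSet_Ioi 0) one_pos
    ((strictAntiOn_log_jensen_gap hs).congr fun _ hx =>
      (fwdDiff_logWendelRatio hx (add_pos hx hs.1)).symm)
    (tendsto_logWendelRatio_atTop (Ioo_subset_Icc_self hs))

end Monotonicity

section StudentT

variable {k ν : ℝ}

/-- The value `c_{ν,k}` at the mode of the `k`-dimensional Student t density with `ν` degrees of
freedom, for a real parameter `k` in place of the dimension. -/
noncomputable def studentTMode (k ν : ℝ) : ℝ :=
  Gamma ((ν + k) / 2) / ((π * ν) ^ (k / 2) * Gamma (ν / 2))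

theorem studentTMode_pos (hν : 0 < ν) (hνk : 0 < ν + k) : 0 < studentTMode k ν := by
  have := Gamma_pos_of_pos (half_pos hν)
  have := Gamma_pos_of_pos (half_pos hνk)
  unfold studentTMode
  positivity

theorem log_studentTMode (hν : 0 < ν) (hνk : 0 < ν + k) :
    log (studentTMode k ν) = logWendelRatio (k / 2) (ν / 2) - k / 2 * log (2 * π) := by
  have hΓν : Gamma (ν / 2) ≠ 0 := (Gamma_pos_of_pos (half_pos hν)).ne'
  have hΓνk : Gamma ((ν + k) / 2) ≠ 0 := (Gamma_pos_of_pos (half_pos hνk)).ne'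
  have hπν : 0 < π * ν := mul_pos pi_pos hν
  rw [studentTMode, log_div hΓνk (mul_ne_zero (rpow_pos_of_pos hπν _).ne' hΓν),
    log_mul (rpow_pos_of_pos hπν _).ne' hΓν, log_rpow hπν, log_mul pi_ne_zero hν.ne',
    logWendelRatio, log_div hν.ne' two_ne_zero, log_mul two_ne_zero pi_ne_zero, add_div]
  ring

end StudentT

theorem studentT_mode_dim_one_strictMonoOn_general {k : ℝ} (hk : k ∈ Ioo 0 2) :
    StrictMonoOn (studentTMode k) (Ioi 0) := by
  intro a ha b hb hab
  have hak : 0 < a + k := add_pos ha hk.1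
  have hbk : 0 < b + k := add_pos hb hk.1
  have hk2 : k / 2 ∈ Ioo 0 1 := ⟨half_pos hk.1, (div_lt_one two_pos).2 hk.2⟩
  rw [← log_lt_log_iff (studentTMode_pos ha hak) (studentTMode_pos hb hbk),
    log_studentTMode ha hak, log_studentTMode hb hbk, sub_lt_sub_iff_right]
  exact strictMonoOn_logWendelRatio hk2 (mem_Ioi.2 (half_pos ha)) (mem_Ioi.2 (half_pos hb))
    (div_lt_div_of_pos_right hab two_pos)

/-- The Student t value at the mode in dimension 1,
`c_{ν,1} = Γ((ν+1)/2) / ((πν)^{1/2} Γ(ν/2))`,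
is strictly monotonically increasing on `(0, ∞)`. -/
theorem studentT_mode_dim_one_strictMonoOn :
    StrictMonoOn
      (fun ν : ℝ => Real.Gamma ((ν + 1) / 2) /
        ((Real.pi * ν) ^ ((1 : ℝ) / 2) * Real.Gamma (ν / 2)))
      (Set.Ioi (0 : ℝ)) :=
  studentT_mode_dim_one_strictMonoOn_general ⟨one_pos, one_lt_two⟩
end

section
/- For every integer k ≥ 3, the map ν ↦ c_{ν,k} = Γ((ν+k)/2) / ((πν)^{k/2} Γ(ν/2)) is strictly monotonically decreasing on (0, ∞). -/
open Real Set

/-!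
With `s = k / 2` and `x = ν / 2` the mode value is a constant multiple of `Γ(x + s) / (x ^ s Γ(x))`.
Euler's limit formula for `Γ` writes this ratio as the infinite product over `j` of
`(1 + t) ^ s / (1 + s t)` at `t = 1 / (x + j)`. For `s > 1` that quotient increases with `t`, by
Bernoulli's inequality, so every factor decreases in `x`. Passing to the limit loses strictness,
which splitting off the factor `j = 0` restores.
-/

open Filter Topology

section BernoulliRatio

/-- The quotient of the two sides of Bernoulli's inequality `1 + s * t ≤ (1 + t) ^ s`, used as the
factor at `t = 1 / (x + j)` of the product expansion of `wendelRatio s x`. -/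
noncomputable def bernoulliRatio (s t : ℝ) : ℝ := (1 + t) ^ s / (1 + s * t)

variable {s x : ℝ}

lemma bernoulliRatio_pos {t : ℝ} (hs : 0 ≤ s) (ht : 0 ≤ t) : 0 < bernoulliRatio s t := by
  unfold bernoulliRatio
  positivity

lemma strictMonoOn_bernoulliRatio (hs : 1 < s) : StrictMonoOn (bernoulliRatio s) (Ici 0) := by
  intro t (ht : 0 ≤ t) u (hu : 0 ≤ u) htu
  have hst : 0 < 1 + s * t := by positivity
  have hsu : 0 < 1 + s * u := by positivity
  have hincrement : 0 < (u - t) / (1 + t) := div_pos (sub_pos.2 htu) (by positivity)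
  have hquotient : (1 + s * u) / (1 + s * t) < (1 + u) ^ s / (1 + t) ^ s :=
    calc (1 + s * u) / (1 + s * t) = 1 + s * ((u - t) / (1 + s * t)) := by field_simp; ring
      _ ≤ 1 + s * ((u - t) / (1 + t)) := by
        have : 0 ≤ u - t := sub_nonneg.2 htu.le
        have : t ≤ s * t := le_mul_of_one_le_left ht hs.le
        gcongr
      _ < (1 + (u - t) / (1 + t)) ^ s :=
        one_add_mul_self_lt_rpow_one_add (by linarith) hincrement.ne' hs
      _ = ((1 + u) / (1 + t)) ^ s := by congr 1; field_simp; ring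
      _ = (1 + u) ^ s / (1 + t) ^ s := div_rpow (by positivity) (by positivity) s
  rw [div_lt_div_iff₀ hst (by positivity)] at hquotient
  unfold bernoulliRatio
  rw [div_lt_div_iff₀ hst hsu]
  linarith

lemma strictAntiOn_bernoulliRatio_inv (hs : 1 < s) :
    StrictAntiOn (fun x ↦ bernoulliRatio s x⁻¹) (Ioi 0) :=
  fun x (hx : 0 < x) y (hy : 0 < y) hxy ↦ strictMonoOn_bernoulliRatio hs
    (mem_Ici.2 (by positivity)) (mem_Ici.2 (by positivity)) (inv_strictAnti₀ hx hxy)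

lemma bernoulliRatio_inv (hx : x ≠ 0) :
    bernoulliRatio s x⁻¹ = ((x + 1) / x) ^ s * (x / (x + s)) := by
  have hbase : 1 + x⁻¹ = (x + 1) / x := by field_simp
  have hden : 1 + s * x⁻¹ = (x + s) / x := by field_simp
  rw [bernoulliRatio, hbase, hden, div_eq_mul_inv, inv_div]

lemma prod_range_bernoulliRatio_inv (hx : 0 < x) (n : ℕ) :
    ∏ j ∈ Finset.range n, bernoulliRatio s (x + j)⁻¹ =
      ((x + n) / x) ^ s * ∏ j ∈ Finset.range n, (x + j) / (x + s + j) := by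
  induction n with
  | zero => simp [hx.ne']
  | succ n ih =>
    have htelescope : ((x + n) / x) ^ s * ((x + n + 1) / (x + n)) ^ s = ((x + n + 1) / x) ^ s := by
      rw [← mul_rpow (by positivity) (by positivity)]
      congr 1
      field_simp
    rw [Finset.prod_range_succ, Finset.prod_range_succ, ih, bernoulliRatio_inv (by positivity),
      Nat.cast_succ, ← add_assoc, ← htelescope, add_right_comm x (n : ℝ) s]
    ring

end BernoulliRatio

section WendelRatio

/-- The quotient `Γ(x + s) / (x ^ s Γ(x))`, which tends to `1` as `x → ∞` by Wendel's theorem. At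
`s = k / 2`, `x = ν / 2` it is `(2π) ^ (k / 2)` times the mode value `c_{ν,k}`. -/
noncomputable def wendelRatio (s x : ℝ) : ℝ := Gamma (x + s) / (x ^ s * Gamma x)

variable {s x : ℝ}

lemma wendelRatio_pos (hx : 0 < x) (hxs : 0 < x + s) : 0 < wendelRatio s x :=
  div_pos (Gamma_pos_of_pos hxs) (by positivity)

lemma wendelRatio_eq_bernoulliRatio_mul (hx : 0 < x) (hxs : x + s ≠ 0) :
    wendelRatio s x = bernoulliRatio s x⁻¹ * wendelRatio s (x + 1) := by
  rw [bernoulliRatio_inv hx.ne', wendelRatio, wendelRatio, add_right_comm, Gamma_add_one hxs,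
    Gamma_add_one hx.ne', div_rpow (by positivity) hx.le]
  field_simp

lemma prod_range_succ_bernoulliRatio_inv_eq_GammaSeq (hx : 0 < x) {n : ℕ} (hn : n ≠ 0) :
    ∏ j ∈ Finset.range (n + 1), bernoulliRatio s (x + j)⁻¹ =
      ((n + (x + 1)) / n) ^ s * (GammaSeq (x + s) n / (x ^ s * GammaSeq x n)) := by
  have hn' : (0 : ℝ) < n := by positivity
  rw [prod_range_bernoulliRatio_inv hx, Finset.prod_div_distrib, GammaSeq, GammaSeq,
    rpow_add hn', Nat.cast_succ, div_rpow (by positivity) hx.le, div_rpow (by positivity) hn'.le,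
    show x + ((n : ℝ) + 1) = n + (x + 1) by ring]
  field_simp

lemma tendsto_prod_bernoulliRatio_inv (hx : 0 < x) :
    Tendsto (fun n : ℕ ↦ ∏ j ∈ Finset.range n, bernoulliRatio s (x + j)⁻¹) atTop
      (𝓝 (wendelRatio s x)) := by
  have hΓ : x ^ s * Gamma x ≠ 0 := by positivity
  have hcorrection : Tendsto (fun n : ℕ ↦ ((n + (x + 1)) / n : ℝ) ^ s) atTop (𝓝 1) := by
    have h := (tendsto_natCast_div_add_atTop (x + 1)).inv₀ one_ne_zero
    simp only [inv_div, inv_one] at h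
    simpa only [one_rpow] using h.rpow_const (Or.inl one_ne_zero)
  have hEuler := hcorrection.mul
    ((GammaSeq_tendsto_Gamma (x + s)).div ((GammaSeq_tendsto_Gamma x).const_mul (x ^ s)) hΓ)
  rw [one_mul] at hEuler
  refine (tendsto_add_atTop_iff_nat 1).1 (hEuler.congr' ?_)
  filter_upwards [eventually_ne_atTop 0] with n hn
  exact (prod_range_succ_bernoulliRatio_inv_eq_GammaSeq hx hn).symm

lemma antitoneOn_wendelRatio (hs : 1 < s) : AntitoneOn (wendelRatio s) (Ioi 0) := by
  intro x (hx : 0 < x) y (hy : 0 < y) hxy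
  refine le_of_tendsto_of_tendsto' (tendsto_prod_bernoulliRatio_inv hy)
    (tendsto_prod_bernoulliRatio_inv hx) fun n ↦ Finset.prod_le_prod (fun j _ ↦ ?_) fun j _ ↦ ?_
  · exact (bernoulliRatio_pos (by linarith) (by positivity)).le
  · exact (strictAntiOn_bernoulliRatio_inv hs).antitoneOn (mem_Ioi.2 (by positivity))
      (mem_Ioi.2 (by positivity)) (by gcongr)

lemma strictAntiOn_wendelRatio (hs : 1 < s) : StrictAntiOn (wendelRatio s) (Ioi 0) := by
  intro x (hx : 0 < x) y (hy : 0 < y) hxy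
  have hle : wendelRatio s (y + 1) ≤ wendelRatio s (x + 1) :=
    antitoneOn_wendelRatio hs (mem_Ioi.2 (by positivity)) (mem_Ioi.2 (by positivity)) (by gcongr)
  rw [wendelRatio_eq_bernoulliRatio_mul hx (by positivity),
    wendelRatio_eq_bernoulliRatio_mul hy (by positivity)]
  exact mul_lt_mul (strictAntiOn_bernoulliRatio_inv hs hx hy hxy) hle
    (wendelRatio_pos (by positivity) (by positivity))
    (bernoulliRatio_pos (by positivity) (by positivity)).le

end WendelRatio

lemma studentT_mode_eq_wendelRatio_div {ν : ℝ} (hν : 0 ≤ ν) (k : ℝ) :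
    Gamma ((ν + k) / 2) / ((π * ν) ^ (k / 2) * Gamma (ν / 2)) =
      wendelRatio (k / 2) (ν / 2) / (2 * π) ^ (k / 2) := by
  rw [wendelRatio, ← add_div, show π * ν = 2 * π * (ν / 2) by ring,
    mul_rpow (by positivity) (by positivity), div_div, mul_assoc, mul_comm, mul_assoc]

theorem studentT_mode_strictAntiOn_of_three_le_general (k : ℝ) (hk : 2 < k) :
    StrictAntiOn
      (fun ν : ℝ ↦ Gamma ((ν + k) / 2) / ((π * ν) ^ (k / 2) * Gamma (ν / 2))) (Ioi 0) := by
  intro x (hx : 0 < x) y (hy : 0 < y) hxy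
  have hlt : wendelRatio (k / 2) (y / 2) < wendelRatio (k / 2) (x / 2) :=
    strictAntiOn_wendelRatio (by linarith) (half_pos hx) (half_pos hy) (by gcongr)
  simp only [studentT_mode_eq_wendelRatio_div hx.le, studentT_mode_eq_wendelRatio_div hy.le]
  gcongr

/-- For every integer `k ≥ 3`, the Student t value at the mode
`ν ↦ c_{ν,k} = Γ((ν+k)/2) / ((πν)^{k/2} Γ(ν/2))`
is strictly monotonically decreasing on `(0, ∞)`. -/
theorem studentT_mode_strictAntiOn_of_three_le (k : ℕ) (hk : 3 ≤ k) :
    StrictAntiOn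
      (fun ν : ℝ => Real.Gamma ((ν + k) / 2) /
        ((Real.pi * ν) ^ ((k : ℝ) / 2) * Real.Gamma (ν / 2)))
      (Set.Ioi (0 : ℝ)) :=
  studentT_mode_strictAntiOn_of_three_le_general k (by exact_mod_cast hk)
end

section
/- For every integer k ≥ 3 and every ν > 0, c_{ν,k} > (2π)^{-k/2}; that is, in dimensions k ≥ 3 the Student t value at the mode strictly exceeds the Gaussian value at the mode for every finite ν. -/
open Real

/-!
With `x = ν / 2` and `a = k / 2`, the quotient of the two modes is `Γ (x + a) / (x ^ a * Γ x)`.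
Log-convexity of `Γ` compares the secant slope of `log Γ` over `[x, x + a]` with the slope `log x`
over `[x, x + 1]`, so this quotient is at least `1` when `1 ≤ a`. It is strictly smaller at `x + 1`
than at `x` when `1 < a`, by Bernoulli's inequality, which makes the bound at `x` strict.
-/

section GammaRatio

variable {x a : ℝ}

lemma rpow_mul_Gamma_le_Gamma_add (hx : 0 < x) (ha : 1 ≤ a) :
    x ^ a * Gamma x ≤ Gamma (x + a) := by
  have hxa : 0 < x + a := by linarith
  have hΓ : 0 < Gamma x := Gamma_pos_of_pos hx
  have slope_le : log x ≤ (log (Gamma (x + a)) - log (Gamma x)) / a := by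
    have secant_le := convexOn_log_Gamma.secant_mono (a := x) (x := x + 1) (y := x + a)
      hx (Set.mem_Ioi.2 (by linarith)) hxa (by linarith) (by linarith) (by linarith)
    simpa [Gamma_add_one hx.ne', log_mul hx.ne' hΓ.ne'] using secant_le
  rw [le_div_iff₀ (by linarith)] at slope_le
  rw [← log_le_log_iff (by positivity) (Gamma_pos_of_pos hxa), log_mul (by positivity) hΓ.ne',
    log_rpow hx]
  linarith

lemma rpow_mul_add_lt_mul_add_one_rpow (hx : 0 < x) (ha : 1 < a) :
    x ^ a * (x + a) < x * (x + 1) ^ a :=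
  calc
    x ^ a * (x + a) = x * x ^ a * (1 + a * x⁻¹) := by field_simp
    _ < x * x ^ a * (1 + x⁻¹) ^ a := by
      have x_inv_pos : 0 < x⁻¹ := by positivity
      gcongr
      exact one_add_mul_self_lt_rpow_one_add (by linarith) x_inv_pos.ne' ha
    _ = x * (x + 1) ^ a := by
      rw [mul_assoc, ← mul_rpow hx.le (by positivity), mul_add, mul_one, mul_inv_cancel₀ hx.ne']

lemma rpow_mul_Gamma_lt_Gamma_add (hx : 0 < x) (ha : 1 < a) :
    x ^ a * Gamma x < Gamma (x + a) := by
  have hxa : 0 < x + a := by linarith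
  refine lt_of_mul_lt_mul_left ?_ hxa.le
  calc
    (x + a) * (x ^ a * Gamma x) = x ^ a * (x + a) * Gamma x := by ring
    _ < x * (x + 1) ^ a * Gamma x := by
      gcongr ?_ * _
      exact rpow_mul_add_lt_mul_add_one_rpow hx ha
    _ = (x + 1) ^ a * Gamma (x + 1) := by rw [Gamma_add_one hx.ne']; ring
    _ ≤ Gamma (x + 1 + a) := rpow_mul_Gamma_le_Gamma_add (by linarith) ha.le
    _ = (x + a) * Gamma (x + a) := by rw [add_right_comm, Gamma_add_one hxa.ne']

end GammaRatio

lemma studentT_mode_eq_gaussian_mode_mul {ν : ℝ} (hν : 0 < ν) (k : ℝ) :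
    Gamma ((ν + k) / 2) / ((π * ν) ^ (k / 2) * Gamma (ν / 2)) =
      (2 * π) ^ (-k / 2) *
        (Gamma (ν / 2 + k / 2) / ((ν / 2) ^ (k / 2) * Gamma (ν / 2))) := by
  have pi_mul_eq : π * ν = 2 * π * (ν / 2) := by ring
  rw [pi_mul_eq, mul_rpow (by positivity) (by positivity), neg_div, rpow_neg (by positivity),
    add_div, mul_assoc, ← div_div, div_eq_inv_mul _ ((2 * π) ^ (k / 2)), mul_div_assoc]

theorem studentT_mode_gt_gaussian_mode_of_three_le_general {k ν : ℝ} (hk : 2 < k) (hν : 0 < ν) :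
    (2 * π) ^ (-k / 2) < Gamma ((ν + k) / 2) / ((π * ν) ^ (k / 2) * Gamma (ν / 2)) := by
  have hx : 0 < ν / 2 := by linarith
  have one_lt_ratio : 1 < Gamma (ν / 2 + k / 2) / ((ν / 2) ^ (k / 2) * Gamma (ν / 2)) :=
    (one_lt_div (by positivity)).2 (rpow_mul_Gamma_lt_Gamma_add hx (by linarith))
  rw [studentT_mode_eq_gaussian_mode_mul hν]
  exact lt_mul_of_one_lt_right (by positivity) one_lt_ratio

/-- In dimensions `k ≥ 3`, the Student t value at the mode strictly exceeds the
Gaussian value at the mode for every finite `ν > 0`: `c_{ν,k} > (2π)^{-k/2}`. -/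
theorem studentT_mode_gt_gaussian_mode_of_three_le (k : ℕ) (hk : 3 ≤ k)
    (ν : ℝ) (hν : 0 < ν) :
    Real.Gamma ((ν + k) / 2) /
        ((Real.pi * ν) ^ ((k : ℝ) / 2) * Real.Gamma (ν / 2)) >
      (2 * Real.pi) ^ (-(k : ℝ) / 2) :=
  studentT_mode_gt_gaussian_mode_of_three_le_general (by exact_mod_cast hk) hν
end

section
/- For every ν > 0, ψ((ν+3)/2) − ψ(ν/2) − 3/ν ≤ −1/(ν(ν+1)) < 0, where ψ is the digamma function; consequently the derivative of ν ↦ log c_{ν,3} is at most −1/(2ν(ν+1)) and is strictly negative. -/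
open Real

/-- The digamma function: the derivative of `x ↦ log Γ(x)`. -/
noncomputable def digamma (x : ℝ) : ℝ :=
  deriv (fun y : ℝ => Real.log (Real.Gamma y)) x

/-!
Since `log Γ` is convex, `ψ` is monotone; since `ψ (x + 1) = ψ x + 1 / x`, it also lies above its
unit chords: the gap `ψ (x + s) - ψ x - s / x` for `0 ≤ s ≤ 1` decreases along unit steps in `x`,
while monotonicity bounds it below by `-s / x`, which vanishes at infinity.

For `k = 3`, the chord from `(ν + 1) / 2` to `(ν + 3) / 2` gives the upper bound
`ψ ((ν + 3) / 2) - ψ (ν / 2) ≤ 2 / ν + 1 / (ν + 1)`, and the logarithmic derivative of `c_{ν,k}`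
in `ν` is `(ψ ((ν + k) / 2) - ψ (ν / 2) - k / ν) / 2`.
-/

open Filter Set Topology

section Digamma

variable {x s : ℝ}

theorem hasDerivAt_log_Gamma (hx : 0 < x) :
    HasDerivAt (fun y ↦ log (Gamma y)) (digamma x) x :=
  have hΓ : DifferentiableAt ℝ Gamma x :=
    differentiableAt_Gamma fun m ↦ ((neg_nonpos.2 m.cast_nonneg).trans_lt hx).ne'
  (hΓ.log (Gamma_pos_of_pos hx).ne').hasDerivAt

theorem monotoneOn_digamma : MonotoneOn digamma (Ioi 0) :=
  convexOn_log_Gamma.monotoneOn_deriv fun _ hx ↦ (hasDerivAt_log_Gamma hx).differentiableAt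

theorem digamma_add_one (hx : 0 < x) : digamma (x + 1) = digamma x + x⁻¹ := by
  have hshift : HasDerivAt (fun y ↦ log (Gamma (y + 1))) (digamma (x + 1)) x :=
    (hasDerivAt_log_Gamma (by positivity)).comp_add_const x 1
  have hsum : HasDerivAt (fun y ↦ log (Gamma y) + log y) (digamma x + x⁻¹) x :=
    (hasDerivAt_log_Gamma hx).fun_add (hasDerivAt_log hx.ne')
  refine hshift.unique (hsum.congr_of_eventuallyEq ?_)
  filter_upwards [lt_mem_nhds hx] with y hy
  rw [Gamma_add_one hy.ne', log_mul hy.ne' (Gamma_pos_of_pos hy).ne', add_comm]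

/-- The height of the digamma function at `x + s` above its chord over `[x, x + 1]`, whose slope
is `digamma (x + 1) - digamma x = x⁻¹`. -/
noncomputable def digammaChordGap (s x : ℝ) : ℝ :=
  digamma (x + s) - digamma x - s / x

theorem digammaChordGap_add_one_le (hx : 0 < x) (hs₀ : 0 ≤ s) (hs₁ : s ≤ 1) :
    digammaChordGap s (x + 1) ≤ digammaChordGap s x := by
  have hdiff : digammaChordGap s x - digammaChordGap s (x + 1) =
      s * (1 - s) / (x * (x + s) * (x + 1)) := by
    have hxs : 0 < x + s := by positivity
    rw [digammaChordGap, digammaChordGap, add_right_comm, digamma_add_one hxs, digamma_add_one hx]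
    field_simp
    ring
  have : 0 ≤ 1 - s := sub_nonneg.2 hs₁
  exact sub_nonneg.1 (hdiff ▸ by positivity)

theorem neg_div_le_digammaChordGap (hx : 0 < x) (hs : 0 ≤ s) :
    -(s / x) ≤ digammaChordGap s x := by
  have hmono : digamma x ≤ digamma (x + s) :=
    monotoneOn_digamma hx (add_pos_of_pos_of_nonneg hx hs) (le_add_of_nonneg_right hs)
  rw [digammaChordGap]
  linarith

theorem digammaChordGap_nonneg (hx : 0 < x) (hs₀ : 0 ≤ s) (hs₁ : s ≤ 1) :
    0 ≤ digammaChordGap s x := by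
  have hanti : Antitone fun n : ℕ ↦ digammaChordGap s (x + n) :=
    antitone_nat_of_succ_le fun n ↦ by
      simpa only [Nat.cast_succ, ← add_assoc] using
        digammaChordGap_add_one_le (x := x + n) (by positivity) hs₀ hs₁
  have hbound (n : ℕ) : -(s / (x + n)) ≤ digammaChordGap s x :=
    calc -(s / (x + n)) ≤ digammaChordGap s (x + n) :=
          neg_div_le_digammaChordGap (by positivity) hs₀
      _ ≤ digammaChordGap s x := by simpa using hanti n.zero_le
  have hlim : Tendsto (fun n : ℕ ↦ -(s / (x + n))) atTop (𝓝 0) := by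
    simpa only [neg_zero] using
      ((tendsto_atTop_add_const_left _ x tendsto_natCast_atTop_atTop).const_div_atTop s).neg
  exact le_of_tendsto' hlim hbound

theorem digamma_add_one_add_sub_digamma_le (hx : 0 < x) (hs₀ : 0 ≤ s) (hs₁ : s ≤ 1) :
    digamma (x + 1 + s) - digamma x ≤ x⁻¹ + s / (x + s) := by
  have hxs : 0 < x + s := by positivity
  have hgap := digammaChordGap_nonneg hxs (sub_nonneg.2 hs₁) (sub_le_self 1 hs₀)
  rw [digammaChordGap, add_add_sub_cancel, digamma_add_one hx, sub_div, one_div] at hgap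
  rw [add_right_comm, digamma_add_one hxs]
  linarith

end Digamma

/-- The normalizing constant `c_{ν,k}` of the `k`-dimensional Student `t` density with `ν` degrees
of freedom, for a real dimension parameter `k`. -/
noncomputable def studentConst (k ν : ℝ) : ℝ :=
  Gamma ((ν + k) / 2) / ((π * ν) ^ (k / 2) * Gamma (ν / 2))

section StudentConst

variable {k ν : ℝ}

theorem log_studentConst (hν : 0 < ν) (hνk : 0 < ν + k) :
    log (studentConst k ν) =
      log (Gamma ((ν + k) / 2)) - (k / 2 * (log π + log ν) + log (Gamma (ν / 2))) := by
  have hnum : 0 < Gamma ((ν + k) / 2) := Gamma_pos_of_pos (by positivity)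
  have hden : 0 < Gamma (ν / 2) := Gamma_pos_of_pos (by positivity)
  have hpow : 0 < (π * ν) ^ (k / 2) := by positivity
  rw [studentConst, log_div hnum.ne' (by positivity), log_mul hpow.ne' hden.ne',
    log_rpow (by positivity), log_mul pi_ne_zero hν.ne']

theorem hasDerivAt_log_studentConst (hν : 0 < ν) (hνk : 0 < ν + k) :
    HasDerivAt (fun t ↦ log (studentConst k t))
      ((digamma ((ν + k) / 2) - digamma (ν / 2) - k / ν) / 2) ν := by
  have hnum : HasDerivAt (fun t ↦ log (Gamma ((t + k) / 2))) (digamma ((ν + k) / 2) * (1 / 2)) ν :=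
    (hasDerivAt_log_Gamma (by positivity)).comp ν
      (((hasDerivAt_id' ν).add_const k).div_const 2)
  have hden : HasDerivAt (fun t ↦ log (Gamma (t / 2))) (digamma (ν / 2) * (1 / 2)) ν :=
    (hasDerivAt_log_Gamma (by positivity)).comp ν ((hasDerivAt_id' ν).div_const 2)
  have hpow : HasDerivAt (fun t ↦ k / 2 * (log π + log t)) (k / 2 * ν⁻¹) ν :=
    ((hasDerivAt_log hν.ne').const_add _).const_mul _
  have heq : (fun t ↦ log (studentConst k t)) =ᶠ[𝓝 ν] fun t ↦
      log (Gamma ((t + k) / 2)) - (k / 2 * (log π + log t) + log (Gamma (t / 2))) := by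
    filter_upwards [lt_mem_nhds hν, lt_mem_nhds (neg_lt_iff_pos_add.2 hνk)] with t ht htk
    exact log_studentConst ht (neg_lt_iff_pos_add.1 htk)
  exact ((hnum.fun_sub (hpow.fun_add hden)).congr_of_eventuallyEq heq).congr_deriv (by ring)

end StudentConst

/-- For every `ν > 0`, `ψ((ν+3)/2) − ψ(ν/2) − 3/ν ≤ −1/(ν(ν+1)) < 0`;
consequently the derivative of `ν ↦ log c_{ν,3}` is at most `−1/(2ν(ν+1))` and
is strictly negative. -/
theorem digamma_dim_three_bound (ν : ℝ) (hν : 0 < ν) :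
    (digamma ((ν + 3) / 2) - digamma (ν / 2) - 3 / ν ≤ -(1 / (ν * (ν + 1))) ∧
      -(1 / (ν * (ν + 1))) < 0) ∧
    (deriv (fun t : ℝ => Real.log (Real.Gamma ((t + 3) / 2) /
          ((Real.pi * t) ^ ((3 : ℝ) / 2) * Real.Gamma (t / 2)))) ν ≤
        -(1 / (2 * ν * (ν + 1))) ∧
      deriv (fun t : ℝ => Real.log (Real.Gamma ((t + 3) / 2) /
          ((Real.pi * t) ^ ((3 : ℝ) / 2) * Real.Gamma (t / 2)))) ν < 0) := by
  have hbound : digamma ((ν + 3) / 2) - digamma (ν / 2) - 3 / ν ≤ -(1 / (ν * (ν + 1))) :=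
    calc digamma ((ν + 3) / 2) - digamma (ν / 2) - 3 / ν
        = digamma (ν / 2 + 1 + 1 / 2) - digamma (ν / 2) - 3 / ν := by ring_nf
      _ ≤ (ν / 2)⁻¹ + 1 / 2 / (ν / 2 + 1 / 2) - 3 / ν := by
          gcongr
          exact digamma_add_one_add_sub_digamma_le (by positivity) (by norm_num) (by norm_num)
      _ = -(1 / (ν * (ν + 1))) := by
          field_simp
          ring
  have hneg : -(1 / (ν * (ν + 1))) < 0 := neg_lt_zero.2 (by positivity)
  have hderiv := (hasDerivAt_log_studentConst (k := 3) hν (by positivity)).deriv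
  simp only [studentConst] at hderiv
  have hhalf : 1 / (2 * ν * (ν + 1)) = 1 / (ν * (ν + 1)) / 2 := by
    field_simp
  rw [hderiv, hhalf]
  exact ⟨⟨hbound, hneg⟩, by linarith, by linarith⟩
end

section
/- Let k ≥ 1 be an integer, let ν₁, ν₂ > 0, and let 0 ≤ m < min(ν₁, ν₂). Then the ratio of m-th absolute moments of the k-variate Student t distributions with ν₁ and ν₂ degrees of freedom equals (ν₁/ν₂)^{m/2} Γ((ν₁−m)/2) Γ(ν₂/2) / (Γ((ν₂−m)/2) Γ(ν₁/2)); in particular, this ratio (∫_{ℝ^k} ‖x‖^m f_{ν₁}^k(x) dx) / (∫_{ℝ^k} ‖x‖^m f_{ν₂}^k(x) dx) does not depend on the dimension k. -/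
open Real MeasureTheory

/-! In dimension `d`, polar coordinates and the substitution `x = r ^ 2 / ν` turn the integral of
`‖x‖ ^ m * (1 + ‖x‖ ^ 2 / ν) ^ (-(ν + d) / 2)` into a multiple, independent of `ν`, of
`ν ^ ((m + d) / 2) * B((m + d) / 2, (ν - m) / 2)`. The normalizing constant cancels the factors
`Γ((ν + d) / 2)` and `ν ^ (d / 2)` in which `ν` and `d` are coupled, so the moment is
`ν ^ (m / 2) * Γ((ν - m) / 2) / Γ(ν / 2)` times a nonzero factor independent of `ν`. -/

open Set Module
open ProbabilityTheory (beta beta_eq_betaIntegralReal)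

section BetaIntegral

variable {a b : ℝ} {K : Type*} [Field K] [LinearOrder K] [IsStrictOrderedRing K]

lemma integral_Ioo_rpow_mul_one_sub_rpow (ha : 0 < a) (hb : 0 < b) :
    ∫ x in Ioo (0 : ℝ) 1, x ^ (a - 1) * (1 - x) ^ (b - 1) = beta a b := by
  have complex_eq_ofReal : Complex.betaIntegral a b =
      ((∫ x in Ioc (0 : ℝ) 1, x ^ (a - 1) * (1 - x) ^ (b - 1) : ℝ) : ℂ) := by
    rw [Complex.betaIntegral, intervalIntegral.integral_of_le zero_le_one,
      ← integral_complex_ofReal]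
    refine setIntegral_congr_fun measurableSet_Ioc fun x hx => ?_
    push_cast [Complex.ofReal_cpow hx.1.le, Complex.ofReal_cpow (sub_nonneg.2 hx.2)]
    rfl
  rw [beta_eq_betaIntegralReal a b ha hb, complex_eq_ofReal, Complex.ofReal_re,
    integral_Ioc_eq_integral_Ioo]

lemma image_div_one_add_Ioi :
    (fun x : K => x / (1 + x)) '' Ioi 0 = Ioo 0 1 := by
  ext y
  constructor
  · rintro ⟨x, hx : 0 < x, rfl⟩
    exact ⟨by positivity, (div_lt_one (by positivity)).2 (lt_one_add x)⟩
  · rintro ⟨hy_pos, hy_lt⟩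
    have one_sub_pos : 0 < 1 - y := sub_pos.2 hy_lt
    refine ⟨y / (1 - y), div_pos hy_pos one_sub_pos, ?_⟩
    field_simp
    ring

lemma injOn_div_one_add_Ioi :
    InjOn (fun x : K => x / (1 + x)) (Ioi 0) := by
  intro x (hx : 0 < x) y (hy : 0 < y) (hxy : x / (1 + x) = y / (1 + y))
  rw [div_eq_div_iff (by positivity) (by positivity)] at hxy
  linarith

lemma integral_Ioi_rpow_mul_one_add_rpow (ha : 0 < a) (hb : 0 < b) :
    ∫ x in Ioi (0 : ℝ), x ^ (a - 1) * (1 + x) ^ (-(a + b)) = beta a b := by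
  have hasDeriv (x : ℝ) (hx : x ∈ Ioi 0) :
      HasDerivWithinAt (fun x : ℝ => x / (1 + x)) (1 / (1 + x) ^ 2) (Ioi 0) x := by
    have hx : 1 + x ≠ 0 := (add_pos one_pos hx).ne'
    exact (((hasDerivAt_id' x).div ((hasDerivAt_id' x).const_add 1) hx).congr_deriv
      (by ring)).hasDerivWithinAt
  rw [← integral_Ioo_rpow_mul_one_sub_rpow ha hb, ← image_div_one_add_Ioi,
    integral_image_eq_integral_abs_deriv_smul measurableSet_Ioi hasDeriv injOn_div_one_add_Ioi]
  refine setIntegral_congr_fun measurableSet_Ioi fun x (hx : 0 < x) => ?_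
  have one_add_pos : 0 < 1 + x := by positivity
  have one_sub_eq : 1 - x / (1 + x) = (1 + x)⁻¹ := by field_simp; ring
  have weight_pos : 0 < 1 / (1 + x) ^ 2 := by positivity
  simp only [smul_eq_mul]
  rw [one_sub_eq, abs_of_pos weight_pos, div_rpow hx.le one_add_pos.le, inv_rpow one_add_pos.le,
    rpow_neg one_add_pos.le, rpow_add one_add_pos, rpow_sub_one one_add_pos.ne',
    rpow_sub_one one_add_pos.ne']
  field_simp

lemma integral_Ioi_rpow_mul_one_add_rpow_div_rpow {p ν : ℝ} (hp : 0 < p) (hν : 0 < ν)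
    (ha : 0 < a) (hb : 0 < b) :
    ∫ r in Ioi (0 : ℝ), r ^ (p * a - 1) * (1 + r ^ p / ν) ^ (-(a + b)) = ν ^ a / p * beta a b := by
  have scaled : ∫ y in Ioi (0 : ℝ), y ^ (a - 1) * (1 + y / ν) ^ (-(a + b)) = ν ^ a * beta a b := by
    rw [← mul_zero ν, ← integral_comp_mul_left_Ioi' _ 0 hν, smul_eq_mul,
      ← integral_Ioi_rpow_mul_one_add_rpow ha hb, ← integral_const_mul, ← integral_const_mul]
    refine setIntegral_congr_fun measurableSet_Ioi fun x (hx : 0 < x) => ?_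
    rw [mul_rpow hν.le hx.le, mul_div_cancel_left₀ x hν.ne', rpow_sub_one hν.ne']
    field_simp
  rw [div_mul_eq_mul_div, eq_div_iff hp.ne', ← scaled, ← integral_mul_const,
    ← integral_comp_rpow_Ioi_of_pos (g := fun y => y ^ (a - 1) * (1 + y / ν) ^ (-(a + b))) hp]
  refine setIntegral_congr_fun measurableSet_Ioi fun r (hr : 0 < r) => ?_
  have power_eq : r ^ (p * a - 1) = r ^ (p - 1) * (r ^ p) ^ (a - 1) := by
    rw [← rpow_mul hr.le, ← rpow_add hr]
    ring_nf
  simp only [smul_eq_mul, power_eq]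
  ring

end BetaIntegral

section StudentT

variable {E : Type*} [NormedAddCommGroup E] [NormedSpace ℝ E]

/-- The Student t density with `ν` degrees of freedom on a `d`-dimensional real normed space, where
`d = finrank ℝ E`; this is `f_ν^d` for `E = EuclideanSpace ℝ (Fin d)`. It keeps the Euclidean
normalizing constant, which makes it a probability density for the volume of an inner product space;
for other norms and Haar measures its total mass is a constant independent of `ν`. -/
noncomputable def studentTDensity (ν : ℝ) (x : E) : ℝ :=
  Gamma ((ν + finrank ℝ E) / 2) / ((π * ν) ^ ((finrank ℝ E : ℝ) / 2) * Gamma (ν / 2)) *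
    (1 + ‖x‖ ^ 2 / ν) ^ (-(ν + finrank ℝ E) / 2)

variable [FiniteDimensional ℝ E] [Nontrivial E] [MeasurableSpace E] [BorelSpace E]
  (μ : Measure E) [μ.IsAddHaarMeasure] {ν m : ℝ}

lemma integral_norm_rpow_mul_one_add_norm_sq_div_rpow {s : ℝ} (hν : 0 < ν)
    (hm : -(finrank ℝ E : ℝ) < m) (hs : m + finrank ℝ E < 2 * s) :
    ∫ x : E, ‖x‖ ^ m * (1 + ‖x‖ ^ 2 / ν) ^ (-s) ∂μ =
      finrank ℝ E * μ.real (Metric.ball 0 1) *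
        (ν ^ ((m + finrank ℝ E) / 2) / 2 *
          beta ((m + finrank ℝ E) / 2) (s - (m + finrank ℝ E) / 2)) := by
  rw [integral_fun_norm_addHaar μ fun r => r ^ m * (1 + r ^ 2 / ν) ^ (-s), nsmul_eq_mul,
    smul_eq_mul, mul_assoc, ← integral_Ioi_rpow_mul_one_add_rpow_div_rpow two_pos hν
      (by linarith) (by linarith)]
  congr 2
  refine setIntegral_congr_fun measurableSet_Ioi fun r (hr : 0 < r) => ?_
  have power_eq : r ^ (2 * ((m + finrank ℝ E) / 2) - 1) = r ^ (finrank ℝ E - 1) * r ^ m := by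
    rw [← rpow_natCast, ← rpow_add hr, Nat.cast_pred finrank_pos]
    ring_nf
  simp only [smul_eq_mul, rpow_two, add_sub_cancel, power_eq, mul_assoc]

lemma integral_norm_rpow_mul_studentTDensity (hν : 0 < ν) (hm : -(finrank ℝ E : ℝ) < m)
    (hmν : m < ν) :
    ∫ x : E, ‖x‖ ^ m * studentTDensity ν x ∂μ =
      finrank ℝ E * μ.real (Metric.ball 0 1) * Gamma ((m + finrank ℝ E) / 2) /
          (2 * π ^ ((finrank ℝ E : ℝ) / 2)) *
        (ν ^ (m / 2) * Gamma ((ν - m) / 2) / Gamma (ν / 2)) := by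
  simp only [studentTDensity, mul_left_comm (‖_‖ ^ m), neg_div]
  rw [integral_const_mul, integral_norm_rpow_mul_one_add_norm_sq_div_rpow μ hν hm (by linarith),
    beta, add_sub_cancel, mul_rpow pi_pos.le hν.le, add_div m, rpow_add hν,
    show (ν + finrank ℝ E) / 2 - (m / 2 + finrank ℝ E / 2) = (ν - m) / 2 by ring]
  have : Gamma ((ν + finrank ℝ E) / 2) ≠ 0 := (Gamma_pos_of_pos (by positivity)).ne'
  field_simp

theorem studentT_moment_ratio_general {ν₁ ν₂ : ℝ} (hν₁ : 0 < ν₁) (hν₂ : 0 < ν₂)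
    (hm : -(finrank ℝ E : ℝ) < m) (hmν : m < min ν₁ ν₂) :
    (∫ x : E, ‖x‖ ^ m * studentTDensity ν₁ x ∂μ) / (∫ x : E, ‖x‖ ^ m * studentTDensity ν₂ x ∂μ) =
      (ν₁ / ν₂) ^ (m / 2) * (Gamma ((ν₁ - m) / 2) * Gamma (ν₂ / 2)) /
        (Gamma ((ν₂ - m) / 2) * Gamma (ν₁ / 2)) := by
  obtain ⟨hmν₁, hmν₂⟩ := lt_min_iff.1 hmν
  have unitBall_pos : 0 < μ.real (Metric.ball (0 : E) 1) :=
    ENNReal.toReal_pos (Metric.measure_ball_pos μ 0 one_pos).ne' measure_ball_lt_top.ne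
  have dim_pos : (0 : ℝ) < finrank ℝ E := Nat.cast_pos.2 finrank_pos
  have gamma_pos : 0 < Gamma ((m + finrank ℝ E) / 2) := Gamma_pos_of_pos (by linarith)
  rw [integral_norm_rpow_mul_studentTDensity μ hν₁ hm hmν₁,
    integral_norm_rpow_mul_studentTDensity μ hν₂ hm hmν₂, mul_div_mul_left _ _ (by positivity),
    div_rpow hν₁.le hν₂.le, div_div_div_eq, div_mul_eq_mul_div, div_div]
  ring_nf

end StudentT

/-- For every integer `k ≥ 1`, `ν₁, ν₂ > 0` and `0 ≤ m < min(ν₁, ν₂)`, the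
ratio of the `m`-th absolute moments of the `k`-variate Student t distributions
with `ν₁` and `ν₂` degrees of freedom equals
`(ν₁/ν₂)^{m/2} Γ((ν₁−m)/2) Γ(ν₂/2) / (Γ((ν₂−m)/2) Γ(ν₁/2))`,
which does not depend on the dimension `k`. -/
theorem studentT_moment_ratio (k : ℕ) (hk : 1 ≤ k) (ν₁ ν₂ m : ℝ)
    (hν₁ : 0 < ν₁) (hν₂ : 0 < ν₂) (hm : 0 ≤ m) (hmν : m < min ν₁ ν₂) :
    (∫ x : EuclideanSpace ℝ (Fin k),
        ‖x‖ ^ m *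
          (Real.Gamma ((ν₁ + k) / 2) /
              ((Real.pi * ν₁) ^ ((k : ℝ) / 2) * Real.Gamma (ν₁ / 2)) *
            (1 + ‖x‖ ^ 2 / ν₁) ^ (-(ν₁ + k) / 2))) /
      (∫ x : EuclideanSpace ℝ (Fin k),
        ‖x‖ ^ m *
          (Real.Gamma ((ν₂ + k) / 2) /
              ((Real.pi * ν₂) ^ ((k : ℝ) / 2) * Real.Gamma (ν₂ / 2)) *
            (1 + ‖x‖ ^ 2 / ν₂) ^ (-(ν₂ + k) / 2))) =
      (ν₁ / ν₂) ^ (m / 2) *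
        (Real.Gamma ((ν₁ - m) / 2) * Real.Gamma (ν₂ / 2)) /
        (Real.Gamma ((ν₂ - m) / 2) * Real.Gamma (ν₁ / 2)) := by
  have : Nonempty (Fin k) := ⟨⟨0, hk⟩⟩
  have neg_dim_lt : -(finrank ℝ (EuclideanSpace ℝ (Fin k)) : ℝ) < m :=
    (neg_neg_of_pos (Nat.cast_pos.2 finrank_pos)).trans_le hm
  simpa only [studentTDensity, finrank_euclideanSpace_fin] using
    studentT_moment_ratio_general volume hν₁ hν₂ neg_dim_lt hmν
end
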